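/- Let 0 < α < n, λ₁, λ₂ > 0, β₁, β₂ ∈ ℝ, 1 ≤ p, q < ∞. If M_α is bounded from LM^p(φ_{λ₁}, w_{β₁}^p) to WLM^q(φ_{λ₂}, w_{β₂}^q), then β₂ − β₁ − (n−λ₁)/p + (n−λ₂)/q + α = 0 and α ≤ β₁ + (n−λ₁)/p < n. -/

import Mathlib

open MeasureTheory Metric Set ENNReal

noncomputable section

abbrev Euc (n : ℕ) := EuclideanSpace ℝ (Fin n)

/-- Extended-real weighted local Morrey norm (sup over balls centered at the origin). -/
def lmNormE (n : ℕ) (p : ℝ) (φ : ℝ → ℝ≥0∞) (w : Euc n → ℝ≥0∞) (g : Euc n → ℝ≥0∞) : ℝ≥0∞ :=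
  ⨆ (R : ℝ) (_ : 0 < R),
    ((φ R)⁻¹ * ∫⁻ x in ball (0 : Euc n) R, g x ^ p * w x) ^ (1 / p)

def lmNorm (n : ℕ) (p : ℝ) (φ : ℝ → ℝ≥0∞) (w : Euc n → ℝ≥0∞) (f : Euc n → ℝ) : ℝ≥0∞ :=
  lmNormE n p φ w (fun x => ENNReal.ofReal |f x|)

/-- Weak weighted local Morrey norm (for nonnegative extended-real valued functions). -/
def wlmNormE (n : ℕ) (q : ℝ) (ψ : ℝ → ℝ≥0∞) (v : Euc n → ℝ≥0∞) (g : Euc n → ℝ≥0∞) : ℝ≥0∞ :=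
  ⨆ (R : ℝ) (_ : 0 < R) (t : ℝ≥0∞) (_ : 0 < t),
    t * ((ψ R)⁻¹ * ∫⁻ x in {x : Euc n | x ∈ ball (0 : Euc n) R ∧ t < g x}, v x) ^ (1 / q)

def Doubling (φ : ℝ → ℝ≥0∞) : Prop := ∃ C : ℝ≥0∞, C < ⊤ ∧ ∀ R > (0 : ℝ), φ (2 * R) ≤ C * φ R

def RevDoubling (φ : ℝ → ℝ≥0∞) : Prop :=
  ∃ C : ℝ≥0∞, C < ⊤ ∧ ∀ R > (0 : ℝ), ∀ b ∈ Set.Ioo (0 : ℝ) 1,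
    ∑' j : ℕ, φ (b ^ j * R) ≤ C * φ R

/-- The fractional maximal operator `M_α` (the Hardy–Littlewood maximal
operator when `α = 0`). -/
def fracMax (n : ℕ) (α : ℝ) (g : Euc n → ℝ≥0∞) (x : Euc n) : ℝ≥0∞ :=
  ⨆ (c : Euc n) (r : ℝ) (_ : 0 < r ∧ x ∈ ball c r),
    (volume (ball c r)) ^ (α / (n : ℝ) - 1) * ∫⁻ y in ball c r, g y

/-- The fractional integral (Riesz potential) `I_α`. -/
def fracInt (n : ℕ) (α : ℝ) (g : Euc n → ℝ≥0∞) (x : Euc n) : ℝ≥0∞ :=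
  ∫⁻ y, g y * ENNReal.ofReal (‖x - y‖ ^ (α - (n : ℝ)))

/-- The Köthe dual norm of a weighted local Morrey space, evaluated on a
nonnegative (extended-real valued) function. -/
def kdualLM (n : ℕ) (p : ℝ) (φ : ℝ → ℝ≥0∞) (w : Euc n → ℝ≥0∞) (g : Euc n → ℝ≥0∞) : ℝ≥0∞ :=
  ⨆ (f : Euc n → ℝ) (_ : Measurable f ∧ lmNorm n p φ w f ≤ 1),
    ∫⁻ x, ENNReal.ofReal |f x| * g x

/-- The characteristic function of a ball, as an `ℝ≥0∞` valued function. -/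
def chiE (n : ℕ) (c : Euc n) (r : ℝ) : Euc n → ℝ≥0∞ := (ball c r).indicator fun _ => (1 : ℝ≥0∞)

/-- Samko-type Morrey parameter function `φ_λ(B) = r_B ^ λ`. -/
def phiS (lam : ℝ) : ℝ → ℝ≥0∞ := fun R => ENNReal.ofReal (R ^ lam)

/-- Power weight `w_β(x) = |x| ^ β` (raised to the exponent `s`). -/
def powW (n : ℕ) (β s : ℝ) : Euc n → ℝ≥0∞ := fun x => ENNReal.ofReal (‖x‖ ^ (β * s))

/-!
The critical power `f x = |x| ^ (-γ)`, with `γ = β₁ + (n - λ₁) / p`, has finite norm in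
`LM^p(φ_{λ₁}, w_{β₁}^p)`: every centred ball contributes the same amount, a power of
`∫_{|x| < 1} |x| ^ (λ₁ - n)`. Testing `M_α` on this single function is enough. Averaging over
centred balls only, `M_α f ≥ c r ^ (α - γ)` on `|x| < r`, where `c` is a multiple of
`∫_{|x| < 1} |x| ^ (-γ)`. Hence, for `0 < ρ ≤ r`, the weak norm of `M_α f` is at least a constant
multiple of `c r ^ (α - γ) ρ ^ δ`, where `δ = β₂ + (n - λ₂) / q`. Its finiteness forces `c < ∞`,
that is `γ < n`; taking `ρ = r` and letting it tend to `0` and to `∞` gives `α - γ + δ = 0`; taking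
`r = 1` and letting `ρ` tend to `0` gives `δ ≥ 0`, that is `α ≤ γ`.
-/

section RealPowers

lemma nonneg_of_rpow_le {e K : ℝ} (h : ∀ s ∈ Ioc (0 : ℝ) 1, s ^ e ≤ K) : 0 ≤ e := by
  by_contra! he
  obtain ⟨s, hKs, hs⟩ := (((tendsto_rpow_neg_nhdsGT_zero he).eventually_gt_atTop K).and
    (Ioc_mem_nhdsGT one_pos)).exists
  exact (h s hs).not_gt hKs

lemma eq_zero_of_rpow_le {e K : ℝ} (h : ∀ s : ℝ, 0 < s → s ^ e ≤ K) : e = 0 := by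
  have he : 0 ≤ e := nonneg_of_rpow_le fun s hs => h s hs.1
  have he' : 0 ≤ -e := nonneg_of_rpow_le (K := K) fun s hs => by
    simpa only [Real.inv_rpow hs.1.le, Real.rpow_neg hs.1.le] using h s⁻¹ (inv_pos.2 hs.1)
  linarith

end RealPowers

section RadialPowers

/-- The moment `∫_{|x| < 1} |x| ^ a dμ`, the constant in the integrals of `|x| ^ a` over centred
balls. It lives in `ℝ≥0∞` because it is infinite when the singularity at `0` is not integrable. -/
def unitBallMoment {E : Type*} [NormedAddCommGroup E] [MeasurableSpace E] (μ : Measure E) (a : ℝ) :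
    ℝ≥0∞ :=
  ∫⁻ x in ball 0 1, ENNReal.ofReal (‖x‖ ^ a) ∂μ

variable {E : Type*} [NormedAddCommGroup E] [NormedSpace ℝ E] [MeasurableSpace E] [BorelSpace E]
  [FiniteDimensional ℝ E] (μ : Measure E) [μ.IsAddHaarMeasure] {r : ℝ}

lemma setLIntegral_ball_zero_eq_mul_comp_smul (hr : 0 < r) (f : E → ℝ≥0∞) :
    ∫⁻ x in ball 0 r, f x ∂μ =
      ENNReal.ofReal (r ^ Module.finrank ℝ E) * ∫⁻ x in ball 0 1, f (r • x) ∂μ := by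
  have hball : (fun x : E => r • x) ⁻¹' ball 0 r = ball 0 1 := by
    ext x
    simp [norm_smul, abs_of_pos hr, hr]
  have hmap : μ = ENNReal.ofReal (r ^ Module.finrank ℝ E) • μ.map (fun x => r • x) := by
    rw [Measure.map_addHaar_smul μ hr.ne', smul_smul, ← ENNReal.ofReal_mul (by positivity),
      abs_of_pos (by positivity), mul_inv_cancel₀ (by positivity), ENNReal.ofReal_one, one_smul]
  have hemb : MeasurableEmbedding fun x : E => r • x := measurableEmbedding_const_smul₀ hr.ne'
  conv_lhs => rw [hmap]
  rw [Measure.restrict_smul, lintegral_smul_measure, hemb.restrict_map, hemb.lintegral_map, hball,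
    smul_eq_mul]

lemma setLIntegral_ball_zero_norm_rpow (hr : 0 < r) (a : ℝ) :
    ∫⁻ x in ball 0 r, ENNReal.ofReal (‖x‖ ^ a) ∂μ =
      ENNReal.ofReal (r ^ (a + Module.finrank ℝ E)) * unitBallMoment μ a := by
  have hsmul (x : E) :
      ENNReal.ofReal (‖r • x‖ ^ a) = ENNReal.ofReal (r ^ a) * ENNReal.ofReal (‖x‖ ^ a) := by
    rw [norm_smul, Real.norm_of_nonneg hr.le, Real.mul_rpow hr.le (norm_nonneg x),
      ENNReal.ofReal_mul (by positivity)]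
  simp_rw [setLIntegral_ball_zero_eq_mul_comp_smul μ hr, hsmul]
  rw [lintegral_const_mul' _ _ ENNReal.ofReal_ne_top, ← mul_assoc,
    ← ENNReal.ofReal_mul (by positivity), add_comm, Real.rpow_add hr, Real.rpow_natCast,
    unitBallMoment]

variable [Nontrivial E]

lemma unitBallMoment_ne_zero (a : ℝ) : unitBallMoment μ a ≠ 0 := by
  have hball : 0 < μ (ball (0 : E) 1 \ {0}) := by
    rw [measure_sdiff_null (measure_singleton 0)]
    exact measure_ball_pos μ 0 one_pos
  refine ((setLIntegral_pos_iff (by fun_prop)).2 (hball.trans_le (measure_mono ?_))).ne'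
  rintro x ⟨hx, hx0⟩
  have : 0 < ‖x‖ := norm_pos_iff.2 hx0
  exact ⟨(ENNReal.ofReal_pos.2 (by positivity)).ne', hx⟩

lemma unitBallMoment_ne_top_iff {a : ℝ} :
    unitBallMoment μ a ≠ ⊤ ↔ 0 < a + Module.finrank ℝ E := by
  have hdim : 1 ≤ Module.finrank ℝ E := Module.finrank_pos
  have hradial : EqOn (fun y : ℝ => y ^ (Module.finrank ℝ E - 1) • y ^ a)
      (fun y => y ^ (a + Module.finrank ℝ E - 1)) (Ioo 0 1) := fun y hy => by
    simp only [smul_eq_mul]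
    rw [← Real.rpow_natCast, ← Real.rpow_add hy.1, Nat.cast_sub hdim]
    congr 1
    push_cast
    ring
  calc unitBallMoment μ a ≠ ⊤
    _ ↔ IntegrableOn (fun x : E => ‖x‖ ^ a) (ball 0 1) μ :=
      lintegral_ofReal_ne_top_iff_integrable (measurable_norm.pow_const a).aestronglyMeasurable
        (ae_of_all _ fun x => by positivity)
    _ ↔ IntegrableOn (fun y : ℝ => y ^ (a + Module.finrank ℝ E - 1)) (Ioo 0 1) := by
      rw [integrableOn_fun_norm_addHaar μ (f := (· ^ a)),
        integrableOn_congr_fun hradial measurableSet_Ioo]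
    _ ↔ 0 < a + Module.finrank ℝ E := by
      rw [intervalIntegral.integrableOn_Ioo_rpow_iff one_pos]
      constructor <;> intro h <;> linarith

end RadialPowers

section FractionalMaximalFunction

variable {n : ℕ} {α r : ℝ}

lemma le_fracMax {c x : Euc n} (hx : x ∈ ball c r) (g : Euc n → ℝ≥0∞) :
    volume (ball c r) ^ (α / n - 1) * ∫⁻ y in ball c r, g y ≤ fracMax n α g x :=
  le_iSup₂_of_le c r <| le_iSup_of_le ⟨pos_of_mem_ball hx, hx⟩ le_rfl

lemma le_fracMax_norm_rpow [NeZero n] {x : Euc n} (hx : x ∈ ball 0 r) (a : ℝ) :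
    ENNReal.ofReal (r ^ (α + a)) *
        (volume (ball (0 : Euc n) 1) ^ (α / n - 1) * unitBallMoment (volume : Measure (Euc n)) a) ≤
      fracMax n α (fun y => ENNReal.ofReal |‖y‖ ^ a|) x := by
  have hr : 0 < r := pos_of_mem_ball hx
  have hn : (n : ℝ) ≠ 0 := NeZero.ne _
  have hpow : (r ^ n) ^ (α / n - 1) * r ^ (a + n) = r ^ (α + a) := by
    rw [← Real.rpow_natCast, ← Real.rpow_mul hr.le, ← Real.rpow_add hr]
    congr 1
    field_simp
    ring
  refine le_of_eq_of_le ?_ (le_fracMax hx _)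
  simp_rw [abs_of_nonneg (Real.rpow_nonneg (norm_nonneg _) a)]
  rw [setLIntegral_ball_zero_norm_rpow _ hr, Measure.addHaar_ball _ _ hr.le,
    finrank_euclideanSpace_fin, ENNReal.mul_rpow_of_ne_top ENNReal.ofReal_ne_top
      measure_ball_lt_top.ne, ENNReal.ofReal_rpow_of_pos (by positivity), mul_mul_mul_comm,
    ← ENNReal.ofReal_mul (by positivity), hpow]

end FractionalMaximalFunction

section LocalMorrey

variable {n : ℕ} {p q lam β r ρ : ℝ}

/-- The scaling exponent `γ = β + (n - λ) / p` of `LM^p(φ_λ, w_β^p)` and of its weak version: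
the norm of `f (· / r)` is `r ^ γ` times that of `f`. -/
def morreyExponent (n : ℕ) (lam β p : ℝ) : ℝ := β + (n - lam) / p

lemma inv_phiS_mul_setLIntegral_ball_norm_rpow (hr : 0 < r) (a : ℝ) :
    (phiS lam r)⁻¹ * ∫⁻ x in ball (0 : Euc n) r, ENNReal.ofReal (‖x‖ ^ a) =
      ENNReal.ofReal (r ^ (a + n - lam)) * unitBallMoment (volume : Measure (Euc n)) a := by
  rw [phiS, setLIntegral_ball_zero_norm_rpow _ hr, finrank_euclideanSpace_fin,
    ← ENNReal.ofReal_inv_of_pos (by positivity), ← mul_assoc, ← ENNReal.ofReal_mul (by positivity),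
    Real.rpow_sub hr, div_eq_inv_mul]

lemma lmNorm_norm_rpow_neg_morreyExponent_le (hp : 0 < p) :
    lmNorm n p (phiS lam) (powW n β p) (fun x => ‖x‖ ^ (-morreyExponent n lam β p)) ≤
      unitBallMoment (volume : Measure (Euc n)) (lam - n) ^ (1 / p) := by
  have hexp : -morreyExponent n lam β p * p + β * p = lam - n := by
    rw [morreyExponent]
    field_simp
    ring
  have hweight (x : Euc n) :
      ENNReal.ofReal |‖x‖ ^ (-morreyExponent n lam β p)| ^ p * powW n β p x ≤
        ENNReal.ofReal (‖x‖ ^ (lam - n)) := by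
    rw [powW, abs_of_nonneg (by positivity), ENNReal.ofReal_rpow_of_nonneg (by positivity) hp.le,
      ← ENNReal.ofReal_mul (by positivity), ← Real.rpow_mul (norm_nonneg x), ← hexp]
    exact ENNReal.ofReal_le_ofReal (Real.le_rpow_add (norm_nonneg x) _ _)
  refine iSup₂_le fun R hR => ENNReal.rpow_le_rpow ?_ (by positivity)
  calc (phiS lam R)⁻¹ * ∫⁻ x in ball (0 : Euc n) R,
        ENNReal.ofReal |‖x‖ ^ (-morreyExponent n lam β p)| ^ p * powW n β p x
    _ ≤ (phiS lam R)⁻¹ * ∫⁻ x in ball (0 : Euc n) R, ENNReal.ofReal (‖x‖ ^ (lam - n)) := by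
      gcongr with x
      exact hweight x
    _ = unitBallMoment (volume : Measure (Euc n)) (lam - n) := by
      simp [inv_phiS_mul_setLIntegral_ball_norm_rpow hR]

lemma lmNorm_norm_rpow_neg_morreyExponent_ne_top [NeZero n] (hp : 0 < p) (hlam : 0 < lam) :
    lmNorm n p (phiS lam) (powW n β p) (fun x => ‖x‖ ^ (-morreyExponent n lam β p)) ≠ ⊤ := by
  refine ne_top_of_le_ne_top (ENNReal.rpow_ne_top_of_nonneg (by positivity) ?_)
    (lmNorm_norm_rpow_neg_morreyExponent_le hp)
  rw [unitBallMoment_ne_top_iff, finrank_euclideanSpace_fin]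
  linarith

lemma le_wlmNormE_of_le_on_ball {ψ : ℝ → ℝ≥0∞} {v g : Euc n → ℝ≥0∞} {t : ℝ≥0∞} (hρ : 0 < ρ)
    (hg : ∀ x ∈ ball (0 : Euc n) ρ, t ≤ g x) :
    t * ((ψ ρ)⁻¹ * ∫⁻ x in ball (0 : Euc n) ρ, v x) ^ (1 / q) ≤ wlmNormE n q ψ v g := by
  refine ENNReal.mul_le_of_forall_lt fun s hst b hb => ?_
  rcases eq_zero_or_pos s with rfl | hs
  · simp
  have hlevel : {x | x ∈ ball (0 : Euc n) ρ ∧ s < g x} = ball 0 ρ :=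
    sep_eq_self_iff_mem_true.2 fun x hx => hst.trans_le (hg x hx)
  calc s * b ≤ s * ((ψ ρ)⁻¹ * ∫⁻ x in {x | x ∈ ball (0 : Euc n) ρ ∧ s < g x}, v x) ^ (1 / q) := by
        rw [hlevel]
        gcongr
    _ ≤ wlmNormE n q ψ v g :=
        le_iSup₂_of_le ρ hρ <| le_iSup₂_of_le (f := fun t _ =>
          t * ((ψ ρ)⁻¹ * ∫⁻ x in {x | x ∈ ball (0 : Euc n) ρ ∧ t < g x}, v x) ^ (1 / q)) s hs le_rfl

lemma le_wlmNormE_powW {g : Euc n → ℝ≥0∞} {t : ℝ≥0∞} (hq : 0 < q) (hρ : 0 < ρ)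
    (hg : ∀ x ∈ ball (0 : Euc n) ρ, t ≤ g x) :
    t * (ENNReal.ofReal (ρ ^ morreyExponent n lam β q) *
        unitBallMoment (volume : Measure (Euc n)) (β * q) ^ (1 / q)) ≤
      wlmNormE n q (phiS lam) (powW n β q) g := by
  have hexp : (β * q + n - lam) * (1 / q) = morreyExponent n lam β q := by
    rw [morreyExponent]
    field_simp
    ring
  refine le_of_eq_of_le ?_ (le_wlmNormE_of_le_on_ball hρ hg)
  simp only [powW]
  rw [inv_phiS_mul_setLIntegral_ball_norm_rpow hρ, ENNReal.mul_rpow_of_nonneg _ _ (by positivity),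
    ENNReal.ofReal_rpow_of_pos (by positivity), ← Real.rpow_mul hρ.le, hexp]

variable [NeZero n] {α a : ℝ}

lemma exists_le_wlmNormE_fracMax_norm_rpow (hq : 0 < q) :
    ∃ κ : ℝ≥0∞, κ ≠ 0 ∧ ∀ ρ r : ℝ, 0 < ρ → ρ ≤ r →
      κ * unitBallMoment (volume : Measure (Euc n)) a *
          ENNReal.ofReal (r ^ (α + a) * ρ ^ morreyExponent n lam β q) ≤
        wlmNormE n q (phiS lam) (powW n β q) (fracMax n α fun x => ENNReal.ofReal |‖x‖ ^ a|) := by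
  refine ⟨volume (ball (0 : Euc n) 1) ^ (α / n - 1) *
    unitBallMoment (volume : Measure (Euc n)) (β * q) ^ (1 / q), mul_ne_zero ?_ ?_, ?_⟩
  · exact (ENNReal.rpow_pos (measure_ball_pos _ _ one_pos) measure_ball_lt_top.ne).ne'
  · simp [unitBallMoment_ne_zero, hq.le]
  intro ρ r hρ hρr
  have hr : 0 < r := hρ.trans_le hρr
  refine le_of_eq_of_le ?_ (le_wlmNormE_powW hq hρ fun x hx =>
    le_fracMax_norm_rpow (ball_subset_ball hρr hx) a)
  rw [ENNReal.ofReal_mul (by positivity)]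
  ring

lemma exponents_of_wlmNormE_fracMax_norm_rpow_ne_top (hq : 0 < q)
    (hfin : wlmNormE n q (phiS lam) (powW n β q)
      (fracMax n α fun x => ENNReal.ofReal |‖x‖ ^ a|) ≠ ⊤) :
    0 < a + n ∧ α + a + morreyExponent n lam β q = 0 ∧ 0 ≤ morreyExponent n lam β q := by
  obtain ⟨κ, hκ, hle⟩ :=
    exists_le_wlmNormE_fracMax_norm_rpow (n := n) (lam := lam) (β := β) (α := α) (a := a) hq
  set W := wlmNormE n q (phiS lam) (powW n β q) (fracMax n α fun x => ENNReal.ofReal |‖x‖ ^ a|)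
  set I := unitBallMoment (volume : Measure (Euc n)) a with hI
  set δ := morreyExponent n lam β q
  have hκI : κ * I ≠ 0 := mul_ne_zero hκ (unitBallMoment_ne_zero _ _)
  have hκI_top : κ * I ≠ ⊤ := ne_top_of_le_ne_top hfin (by simpa using hle 1 1 one_pos le_rfl)
  have hI_top : I ≠ ⊤ := fun h => hκI_top (by rw [h, ENNReal.mul_top hκ])
  have hreal : ∀ ρ r : ℝ, 0 < ρ → ρ ≤ r → r ^ (α + a) * ρ ^ δ ≤ (W / (κ * I)).toReal := by
    intro ρ r hρ hρr
    refine (ENNReal.ofReal_le_iff_le_toReal (ENNReal.div_ne_top hfin hκI)).1 ?_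
    rw [ENNReal.le_div_iff_mul_le (.inl hκI) (.inl hκI_top), mul_comm]
    exact hle ρ r hρ hρr
  refine ⟨?_, ?_, ?_⟩
  · rwa [hI, unitBallMoment_ne_top_iff, finrank_euclideanSpace_fin] at hI_top
  · exact eq_zero_of_rpow_le fun s hs => (Real.rpow_add hs _ _).trans_le (hreal s s hs le_rfl)
  · exact nonneg_of_rpow_le fun s hs => by simpa using hreal s 1 hs.1 hs.2

end LocalMorrey

theorem stmt14_general (n : ℕ) (hn : 0 < n) (α lam1 lam2 : ℝ) (hlam1 : 0 < lam1) (β1 β2 p q : ℝ)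
    (hp : 0 < p) (hq : 0 < q)
    (hbdd : ∃ C : ℝ≥0∞, C < ⊤ ∧ ∀ f : Euc n → ℝ, Measurable f →
      wlmNormE n q (phiS lam2) (powW n β2 q) (fracMax n α fun x => ENNReal.ofReal |f x|) ≤
        C * lmNorm n p (phiS lam1) (powW n β1 p) f) :
    β2 - β1 - (n - lam1) / p + (n - lam2) / q + α = 0 ∧
    α ≤ β1 + (n - lam1) / p ∧ β1 + (n - lam1) / p < n := by
  have : NeZero n := ⟨hn.ne'⟩
  obtain ⟨C, hC, hbound⟩ := hbdd
  have hfin := ne_top_of_le_ne_top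
    (ENNReal.mul_ne_top hC.ne (lmNorm_norm_rpow_neg_morreyExponent_ne_top hp hlam1))
    (hbound (fun x => ‖x‖ ^ (-morreyExponent n lam1 β1 p)) (by fun_prop))
  obtain ⟨hlt, hscale, hnonneg⟩ := exponents_of_wlmNormE_fracMax_norm_rpow_ne_top hq hfin
  simp only [morreyExponent] at hlt hscale hnonneg
  refine ⟨?_, ?_, ?_⟩ <;> linarith

theorem stmt14 (n : ℕ) (hn : 0 < n) (α : ℝ) (hα : 0 < α) (hαn : α < n)
    (lam1 lam2 : ℝ) (hlam1 : 0 < lam1) (hlam2 : 0 < lam2) (β1 β2 : ℝ)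
    (p q : ℝ) (hp : 1 ≤ p) (hq : 1 ≤ q)
    (hbdd : ∃ C : ℝ≥0∞, C < ⊤ ∧ ∀ f : Euc n → ℝ, Measurable f →
      wlmNormE n q (phiS lam2) (powW n β2 q) (fracMax n α fun x => ENNReal.ofReal |f x|) ≤
        C * lmNorm n p (phiS lam1) (powW n β1 p) f) :
    β2 - β1 - (n - lam1) / p + (n - lam2) / q + α = 0 ∧
    α ≤ β1 + (n - lam1) / p ∧ β1 + (n - lam1) / p < n := by
  exact stmt14_general n hn α lam1 lam2 hlam1 β1 β2 p q (by linarith) (by linarith) hbdd
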